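/- The Gauss map of M satisfies Δ^{II} n = (1/(2K)) ∇^{I}(K, x) + 2H n on U. -/

import Mathlib

open Matrix

noncomputable section

/-- The parameter domain `ℝ²`. -/
abbrev Param : Type := Fin 2 → ℝ

/-- Vectors in Euclidean 3-space. -/
abbrev Vec3 : Type := Fin 3 → ℝ

/-- Partial derivative of a vector-valued function in the `i`-th coordinate direction. -/
noncomputable def pd (i : Fin 2) (f : Param → Vec3) (u : Param) : Vec3 :=
  fderiv ℝ f u (Pi.single i 1)

/-- Partial derivative of a scalar function in the `i`-th coordinate direction. -/
noncomputable def pds (i : Fin 2) (f : Param → ℝ) (u : Param) : ℝ :=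
  fderiv ℝ f u (Pi.single i 1)

/-- The Euclidean inner product on `ℝ³`. -/
def dot3 (a b : Vec3) : ℝ := ∑ k, a k * b k

/-- The Euclidean norm on `ℝ³`. -/
noncomputable def norm3 (a : Vec3) : ℝ := Real.sqrt (dot3 a a)

/-- The Gauss map `n = (x_{/1} × x_{/2}) / ‖x_{/1} × x_{/2}‖`. -/
noncomputable def gaussMap (x : Param → Vec3) (u : Param) : Vec3 :=
  (norm3 (crossProduct (pd 0 x u) (pd 1 x u)))⁻¹ • crossProduct (pd 0 x u) (pd 1 x u)

/-- Components `g_{ij}` of the first fundamental form. -/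
noncomputable def fformI (x : Param → Vec3) (u : Param) : Matrix (Fin 2) (Fin 2) ℝ :=
  Matrix.of fun i j => dot3 (pd i x u) (pd j x u)

/-- Components `b_{ij} = ⟨∂²x/∂u^i∂u^j, n⟩` of the second fundamental form. -/
noncomputable def fformII (x : Param → Vec3) (u : Param) : Matrix (Fin 2) (Fin 2) ℝ :=
  Matrix.of fun i j => dot3 (pd i (pd j x) u) (gaussMap x u)

/-- Components `e_{ij} = ⟨n_{/i}, n_{/j}⟩` of the third fundamental form. -/
noncomputable def fformIII (x : Param → Vec3) (u : Param) : Matrix (Fin 2) (Fin 2) ℝ :=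
  Matrix.of fun i j => dot3 (pd i (gaussMap x) u) (pd j (gaussMap x) u)

/-- The Gauss curvature `K = det(b_{ij}) / det(g_{ij})`. -/
noncomputable def gaussCurv (x : Param → Vec3) (u : Param) : ℝ :=
  (fformII x u).det / (fformI x u).det

/-- The mean curvature `H = (1/2) g^{ij} b_{ij}`. -/
noncomputable def meanCurv (x : Param → Vec3) (u : Param) : ℝ :=
  (1 / 2) * ∑ i, ∑ j, (fformI x u)⁻¹ i j * fformII x u i j

/-- First Beltrami operator `∇^J(φ, ψ) = a^{ij} φ_{/i} ψ_{/j}` with respect to the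
fundamental form with component matrix `a`, for scalar `φ` and `ℝ³`-valued `ψ`. -/
noncomputable def beltrami1 (a : Param → Matrix (Fin 2) (Fin 2) ℝ)
    (φ : Param → ℝ) (ψ : Param → Vec3) (u : Param) : Vec3 :=
  ∑ i, ∑ j, ((a u)⁻¹ i j * pds i φ u) • pd j ψ u

/-- Second Beltrami operator
`Δ^J f = −(1/√|det a|) ∂_i (√|det a| a^{ij} ∂_j f)` with respect to the fundamental
form with component matrix `a`, acting componentwise on `ℝ³`-valued functions. -/
noncomputable def beltrami2 (a : Param → Matrix (Fin 2) (Fin 2) ℝ)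
    (f : Param → Vec3) (u : Param) : Vec3 :=
  -((Real.sqrt |(a u).det|)⁻¹ •
    ∑ i, ∑ j, pd i (fun v => (Real.sqrt |(a v).det| * (a v)⁻¹ i j) • pd j f v) u)

/-- `x` is an immersion on `U`: the partial derivatives are linearly independent. -/
def Immersed (x : Param → Vec3) (U : Set Param) : Prop :=
  ∀ u ∈ U, LinearIndependent ℝ ![pd 0 x u, pd 1 x u]

/-- `f` is nonconstant on `U`. -/
def NonconstOn (f : Param → Vec3) (U : Set Param) : Prop :=
  ¬ ∃ v : Vec3, ∀ u ∈ U, f u = v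


/-!
The Weingarten equations `n_{/i} = -b_{ik} g^{kj} x_{/j}` say that `b^{ij} n_{/j} = -g^{ij} x_{/j}`,
and `√|det b| = √|K| √(det g)` by definition of `K`. Hence the vector field whose divergence is
`Δ^{II} n` is `-√|K|` times the one whose divergence is `Δ^I x`, and the product rule gives
`Δ^{II} n = |K|^{-1/2} ∇^I(|K|^{1/2}, x) - Δ^I x`. The first term is `∇^I(K, x) / (2K)`, and
`Δ^I x = -2H n` because `√(det g) g^{ij} x_{/j}` is `x_{/2} × n` for `i = 1` and `n × x_{/1}` for
`i = 2`, so that the mixed second derivatives of `x` cancel in the divergence.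
-/

open Topology

section Calculus

variable {X E F G : Type*} [NormedAddCommGroup X] [NormedSpace ℝ X]
  [NormedAddCommGroup E] [NormedSpace ℝ E] [FiniteDimensional ℝ E]
  [NormedAddCommGroup F] [NormedSpace ℝ F] [FiniteDimensional ℝ F]
  [NormedAddCommGroup G] [NormedSpace ℝ G]

lemma contDiffAt_bilinear_apply {k : WithTop ℕ∞} (B : E →ₗ[ℝ] F →ₗ[ℝ] G) {f : X → E} {g : X → F}
    {u : X} (hf : ContDiffAt ℝ k f u) (hg : ContDiffAt ℝ k g u) :
    ContDiffAt ℝ k (fun v => B (f v) (g v)) u :=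
  (B.toContinuousBilinearMap.isBoundedBilinearMap.contDiff.contDiffAt).comp u (hf.prodMk hg)

lemma fderiv_bilinear_apply (B : E →ₗ[ℝ] F →ₗ[ℝ] G) {f : X → E} {g : X → F} {u : X}
    (hf : DifferentiableAt ℝ f u) (hg : DifferentiableAt ℝ g u) (w : X) :
    fderiv ℝ (fun v => B (f v) (g v)) u w =
      B (f u) (fderiv ℝ g u w) + B (fderiv ℝ f u w) (g u) := by
  have := B.toContinuousBilinearMap.fderiv_of_bilinear hf hg
  simp only [LinearMap.toContinuousBilinearMap_apply] at this
  simp [this]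

variable {ι : Type*} [Fintype ι] [DecidableEq ι] {k : WithTop ℕ∞} {A : X → Matrix ι ι ℝ} {u : X}

lemma contDiffAt_matrix_det (hA : ∀ i j, ContDiffAt ℝ k (fun v => A v i j) u) :
    ContDiffAt ℝ k (fun v => (A v).det) u := by
  simp only [Matrix.det_apply]
  exact ContDiffAt.sum fun σ _ => (contDiffAt_prod fun i _ => hA (σ i) i).const_smul _

lemma contDiffAt_matrix_inv_apply (hA : ∀ i j, ContDiffAt ℝ k (fun v => A v i j) u)
    (hdet : (A u).det ≠ 0) (i j : ι) : ContDiffAt ℝ k (fun v => (A v)⁻¹ i j) u := by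
  have hadj : ContDiffAt ℝ k (fun v => (A v).adjugate i j) u := by
    simp only [Matrix.adjugate_apply]
    refine contDiffAt_matrix_det fun r c => ?_
    by_cases hr : r = j
    · simp only [hr, Matrix.updateRow_self]
      exact contDiffAt_const
    · simpa only [Matrix.updateRow_ne hr] using hA r c
  simp only [Matrix.inv_def, Ring.inverse_eq_inv', Matrix.smul_apply, smul_eq_mul]
  exact ((contDiffAt_matrix_det hA).inv hdet).mul hadj

lemma hasDerivAt_sqrt_abs {t : ℝ} (ht : t ≠ 0) :
    HasDerivAt (fun s => √|s|) (√|t| / (2 * t)) t := by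
  convert (hasDerivAt_abs ht).sqrt (abs_ne_zero.2 ht) using 1
  rw [div_eq_div_iff (by positivity) (by positivity)]
  linear_combination 2 * Real.mul_self_sqrt (abs_nonneg t) - 2 * sign_mul_self t

lemma hasFDerivAt_sqrt_abs {φ : X → ℝ} (hφ : DifferentiableAt ℝ φ u) (h0 : φ u ≠ 0) :
    HasFDerivAt (fun v => √|φ v|) ((√|φ u| / (2 * φ u)) • fderiv ℝ φ u) u :=
  (hasDerivAt_sqrt_abs h0).comp_hasFDerivAt u hφ.hasFDerivAt

lemma differentiableAt_sqrt_abs_det (hA : ∀ i j, ContDiffAt ℝ 1 (fun v => A v i j) u)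
    (hdet : (A u).det ≠ 0) : DifferentiableAt ℝ (fun v => √|(A v).det|) u :=
  (hasFDerivAt_sqrt_abs ((contDiffAt_matrix_det hA).differentiableAt one_ne_zero)
    hdet).differentiableAt

end Calculus

section EuclideanVectors

lemma dot3_eq_dotProduct (p q : Vec3) : dot3 p q = p ⬝ᵥ q := rfl

lemma dot3_comm (p q : Vec3) : dot3 p q = dot3 q p := dotProduct_comm p q

lemma dot3_smul (p q : Vec3) (r : ℝ) : dot3 p (r • q) = r * dot3 p q := dotProduct_smul r p q

lemma dot3_self_pos {p : Vec3} (hp : p ≠ 0) : 0 < dot3 p p :=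
  (dotProduct_self_star_nonneg p).lt_of_ne' (by simpa using hp)

lemma norm3_pos {p : Vec3} (hp : p ≠ 0) : 0 < norm3 p := Real.sqrt_pos.2 (dot3_self_pos hp)

lemma norm3_sq (p : Vec3) : norm3 p ^ 2 = dot3 p p :=
  Real.sq_sqrt (dotProduct_self_star_nonneg p)

lemma eq_zero_of_dotProduct_eq_zero {R : Type*} [Field R] [LinearOrder R] [IsStrictOrderedRing R]
    {p q w : Fin 3 → R} (hpq : p ⨯₃ q ≠ 0) (hp : p ⬝ᵥ w = 0) (hq : q ⬝ᵥ w = 0)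
    (hcross : p ⨯₃ q ⬝ᵥ w = 0) : w = 0 := by
  have hparallel : (p ⨯₃ q) ⨯₃ w = 0 := by
    rw [cross_cross_eq_smul_sub_smul, hp, hq, zero_smul, zero_smul, sub_zero]
  have hsmul : (p ⨯₃ q ⬝ᵥ p ⨯₃ q) • w = 0 := by
    have := cross_cross_eq_smul_sub_smul' (p ⨯₃ q) (p ⨯₃ q) w
    rwa [hparallel, map_zero, hcross, zero_smul, zero_sub, eq_comm, neg_eq_zero] at this
  exact (smul_eq_zero.1 hsmul).resolve_left (dotProduct_self_eq_zero.not.2 hpq)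

end EuclideanVectors

section PartialDerivatives

variable {k : WithTop ℕ∞} {f g : Param → Vec3} {φ : Param → ℝ} {u : Param}

lemma contDiffAt_pd (hf : ContDiffAt ℝ (k + 1) f u) (i : Fin 2) : ContDiffAt ℝ k (pd i f) u :=
  (hf.fderiv_right le_rfl).clm_apply contDiffAt_const

lemma contDiffAt_dot3 (hf : ContDiffAt ℝ k f u) (hg : ContDiffAt ℝ k g u) :
    ContDiffAt ℝ k (fun v => dot3 (f v) (g v)) u :=
  contDiffAt_bilinear_apply (dotProductBilin ℝ ℝ) hf hg

lemma pds_dot3 (hf : DifferentiableAt ℝ f u) (hg : DifferentiableAt ℝ g u) (i : Fin 2) :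
    pds i (fun v => dot3 (f v) (g v)) u = dot3 (f u) (pd i g u) + dot3 (pd i f u) (g u) :=
  fderiv_bilinear_apply (dotProductBilin ℝ ℝ) hf hg _

lemma pd_cross (hf : DifferentiableAt ℝ f u) (hg : DifferentiableAt ℝ g u) (i : Fin 2) :
    pd i (fun v => f v ⨯₃ g v) u = f u ⨯₃ pd i g u + pd i f u ⨯₃ g u :=
  fderiv_bilinear_apply crossProduct hf hg _

lemma pd_smul (hφ : DifferentiableAt ℝ φ u) (hg : DifferentiableAt ℝ g u) (i : Fin 2) :
    pd i (fun v => φ v • g v) u = φ u • pd i g u + pds i φ u • g u := by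
  simp [pd, pds, fderiv_fun_smul hφ hg]

lemma pd_comm (hf : ContDiffAt ℝ 2 f u) (i j : Fin 2) : pd i (pd j f) u = pd j (pd i f) u := by
  have hdiff : DifferentiableAt ℝ (fderiv ℝ f) u :=
    (hf.fderiv_right (m := 1) one_add_one_eq_two.le).differentiableAt one_ne_zero
  have pd_pd : ∀ i j, pd i (pd j f) u =
      fderiv ℝ (fderiv ℝ f) u (Pi.single i 1) (Pi.single j 1) := fun i j => by
    unfold pd
    simp [fderiv_clm_apply hdiff (differentiableAt_const _)]
  rw [pd_pd, pd_pd]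
  exact hf.isSymmSndFDerivAt (by simp) _ _

lemma pds_sqrt_abs (hφ : DifferentiableAt ℝ φ u) (h0 : φ u ≠ 0) (i : Fin 2) :
    pds i (fun v => √|φ v|) u = √|φ u| / (2 * φ u) * pds i φ u := by
  rw [pds, (hasFDerivAt_sqrt_abs hφ h0).fderiv]
  rfl

end PartialDerivatives

section Beltrami

/-- The density-weighted gradient `√|det a| a^{ij} f_{/j}`. Its coordinate divergence is
`-√|det a| Δ f`, so both Beltrami operators can be read off from it. -/
def beltramiFlux (a : Param → Matrix (Fin 2) (Fin 2) ℝ) (f : Param → Vec3) (i : Fin 2)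
    (u : Param) : Vec3 :=
  ∑ j, (√|(a u).det| * (a u)⁻¹ i j) • pd j f u

variable {a c : Param → Matrix (Fin 2) (Fin 2) ℝ} {f h : Param → Vec3}
  {ρ φ : Param → ℝ} {u : Param}

lemma differentiableAt_beltramiFlux_term (ha : ∀ i j, ContDiffAt ℝ 1 (fun v => a v i j) u)
    (hdet : (a u).det ≠ 0) (hf : ContDiffAt ℝ 2 f u) (i j : Fin 2) :
    DifferentiableAt ℝ (fun v => (√|(a v).det| * (a v)⁻¹ i j) • pd j f v) u :=
  ((differentiableAt_sqrt_abs_det ha hdet).mul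
    ((contDiffAt_matrix_inv_apply ha hdet i j).differentiableAt one_ne_zero)).smul
    ((contDiffAt_pd hf j).differentiableAt one_ne_zero)

lemma differentiableAt_beltramiFlux (ha : ∀ i j, ContDiffAt ℝ 1 (fun v => a v i j) u)
    (hdet : (a u).det ≠ 0) (hf : ContDiffAt ℝ 2 f u) (i : Fin 2) :
    DifferentiableAt ℝ (beltramiFlux a f i) u :=
  DifferentiableAt.fun_sum fun j _ => differentiableAt_beltramiFlux_term ha hdet hf i j

lemma beltrami2_eq_divergence_beltramiFlux (ha : ∀ i j, ContDiffAt ℝ 1 (fun v => a v i j) u)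
    (hdet : (a u).det ≠ 0) (hf : ContDiffAt ℝ 2 f u) :
    beltrami2 a f u = -((√|(a u).det|)⁻¹ • ∑ i, pd i (beltramiFlux a f i) u) := by
  have hsum : ∀ i, pd i (beltramiFlux a f i) u =
      ∑ j, pd i (fun v => (√|(a v).det| * (a v)⁻¹ i j) • pd j f v) u := fun i => by
    unfold beltramiFlux
    rw [pd, fderiv_fun_sum fun j _ => differentiableAt_beltramiFlux_term ha hdet hf i j,
      _root_.sum_apply]
    rfl
  simp only [beltrami2, hsum]

lemma beltrami1_eq_sum_beltramiFlux (hdet : (a u).det ≠ 0) :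
    beltrami1 a φ f u = (√|(a u).det|)⁻¹ • ∑ i, pds i φ u • beltramiFlux a f i u := by
  have hsqrt : √|(a u).det| ≠ 0 := by positivity
  simp only [beltrami1, beltramiFlux, Finset.smul_sum, smul_smul]
  refine Finset.sum_congr rfl fun i _ => Finset.sum_congr rfl fun j _ => ?_
  congr 1
  field_simp

lemma beltrami2_eq_of_beltramiFlux_eq_neg_smul
    (ha : ∀ i j, ContDiffAt ℝ 1 (fun v => a v i j) u) (hdeta : (a u).det ≠ 0)
    (hf : ContDiffAt ℝ 2 f u)
    (hc : ∀ i j, ContDiffAt ℝ 1 (fun v => c v i j) u) (hdetc : (c u).det ≠ 0)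
    (hh : ContDiffAt ℝ 2 h u)
    (hρ : DifferentiableAt ℝ ρ u) (hdensity : √|(a u).det| = ρ u * √|(c u).det|)
    (hflux : ∀ i, beltramiFlux a f i =ᶠ[𝓝 u] fun v => -ρ v • beltramiFlux c h i v) :
    beltrami2 a f u = (ρ u)⁻¹ • beltrami1 c ρ h u - beltrami2 c h u := by
  have hsqrta : √|(a u).det| ≠ 0 := by positivity
  have hρ0 : ρ u ≠ 0 := left_ne_zero_of_mul (hdensity ▸ hsqrta)
  have hdiv : ∀ i, pd i (beltramiFlux a f i) u =
      -(ρ u • pd i (beltramiFlux c h i) u + pds i ρ u • beltramiFlux c h i u) := fun i => by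
    have hneg : pds i (fun v => -ρ v) u = -pds i ρ u := by simp [pds]
    rw [pd, (hflux i).fderiv_eq, ← pd, pd_smul hρ.fun_neg
      (differentiableAt_beltramiFlux hc hdetc hh i), hneg]
    module
  rw [beltrami2_eq_divergence_beltramiFlux ha hdeta hf,
    beltrami2_eq_divergence_beltramiFlux hc hdetc hh, beltrami1_eq_sum_beltramiFlux hdetc,
    hdensity]
  simp only [hdiv, Finset.sum_neg_distrib, Finset.sum_add_distrib, ← Finset.smul_sum]
  match_scalars <;> field_simp

lemma inv_sqrt_abs_smul_beltrami1 (hφ : DifferentiableAt ℝ φ u) (h0 : φ u ≠ 0) :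
    (√|φ u|)⁻¹ • beltrami1 a (fun v => √|φ v|) f u =
      (1 / (2 * φ u)) • beltrami1 a φ f u := by
  have hsqrt : √|φ u| ≠ 0 := by positivity
  simp only [beltrami1, pds_sqrt_abs hφ h0, Finset.smul_sum, smul_smul]
  refine Finset.sum_congr rfl fun i _ => Finset.sum_congr rfl fun j _ => ?_
  congr 1
  field_simp

end Beltrami

section Surface

/-- The unnormalised normal `x_{/1} × x_{/2}`; its Euclidean norm is the area density, and it
vanishes exactly where `x` fails to be an immersion. -/
def normalVec (x : Param → Vec3) (u : Param) : Vec3 := pd 0 x u ⨯₃ pd 1 x u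

variable {k : WithTop ℕ∞} {x : Param → Vec3} {u : Param}

lemma det_fformI (x : Param → Vec3) (u : Param) :
    (fformI x u).det = norm3 (normalVec x u) ^ 2 := by
  rw [norm3_sq, Matrix.det_fin_two]
  exact (cross_dot_cross _ _ _ _).symm

lemma det_fformI_ne_zero (hN : normalVec x u ≠ 0) : (fformI x u).det ≠ 0 := by
  rw [det_fformI]
  exact pow_ne_zero 2 (norm3_pos hN).ne'

lemma sqrt_abs_det_fformI (x : Param → Vec3) (u : Param) :
    √|(fformI x u).det| = norm3 (normalVec x u) := by
  rw [det_fformI, abs_sq]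
  exact Real.sqrt_sq (Real.sqrt_nonneg _)

lemma norm3_smul_gaussMap (hN : normalVec x u ≠ 0) :
    norm3 (normalVec x u) • gaussMap x u = normalVec x u :=
  smul_inv_smul₀ (norm3_pos hN).ne' _

lemma dot3_gaussMap_self (hN : normalVec x u ≠ 0) : dot3 (gaussMap x u) (gaussMap x u) = 1 := by
  have hW := (norm3_pos hN).ne'
  rw [gaussMap, ← normalVec, dot3_smul, dot3_comm, dot3_smul, ← norm3_sq]
  field_simp

lemma dot3_pd_normalVec (x : Param → Vec3) (u : Param) (j : Fin 2) :
    dot3 (pd j x u) (normalVec x u) = 0 := by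
  fin_cases j
  · exact dot_self_cross _ _
  · exact dot_cross_self _ _

lemma dot3_pd_gaussMap (x : Param → Vec3) (u : Param) (j : Fin 2) :
    dot3 (pd j x u) (gaussMap x u) = 0 := by
  rw [gaussMap, dot3_smul]
  exact mul_eq_zero_of_right _ (dot3_pd_normalVec x u j)

lemma contDiffAt_normalVec (hx : ContDiffAt ℝ (k + 1) x u) : ContDiffAt ℝ k (normalVec x) u :=
  contDiffAt_bilinear_apply crossProduct (contDiffAt_pd hx 0) (contDiffAt_pd hx 1)

lemma contDiffAt_gaussMap (hx : ContDiffAt ℝ (k + 1) x u) (hN : normalVec x u ≠ 0) :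
    ContDiffAt ℝ k (gaussMap x) u := by
  have hN' := contDiffAt_normalVec hx
  exact (((contDiffAt_dot3 hN' hN').sqrt (dot3_self_pos hN).ne').inv (norm3_pos hN).ne').smul hN'

lemma contDiffAt_fformI (hx : ContDiffAt ℝ (k + 1) x u) (i j : Fin 2) :
    ContDiffAt ℝ k (fun v => fformI x v i j) u :=
  contDiffAt_dot3 (contDiffAt_pd hx i) (contDiffAt_pd hx j)

lemma contDiffAt_fformII (hx : ContDiffAt ℝ (k + 1 + 1) x u) (hN : normalVec x u ≠ 0)
    (i j : Fin 2) : ContDiffAt ℝ k (fun v => fformII x v i j) u :=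
  contDiffAt_dot3 (contDiffAt_pd (contDiffAt_pd hx j) i)
    (contDiffAt_gaussMap (hx.of_le le_self_add) hN)

lemma contDiffAt_gaussCurv (hx : ContDiffAt ℝ (k + 1 + 1) x u) (hN : normalVec x u ≠ 0) :
    ContDiffAt ℝ k (gaussCurv x) u :=
  (contDiffAt_matrix_det (contDiffAt_fformII hx hN)).div
    (contDiffAt_matrix_det (contDiffAt_fformI (hx.of_le le_self_add))) (det_fformI_ne_zero hN)

lemma eventually_normalVec_ne_zero (hx : ContDiffAt ℝ 1 x u) (hN : normalVec x u ≠ 0) :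
    ∀ᶠ v in 𝓝 u, normalVec x v ≠ 0 :=
  (contDiffAt_normalVec (k := 0) (by simpa using hx)).continuousAt.eventually_ne hN

lemma eventually_det_fformII_ne_zero (hx : ContDiffAt ℝ 2 x u) (hN : normalVec x u ≠ 0)
    (hdet : (fformII x u).det ≠ 0) : ∀ᶠ v in 𝓝 u, (fformII x v).det ≠ 0 :=
  (contDiffAt_matrix_det (contDiffAt_fformII (k := 0) (by simpa [one_add_one_eq_two] using hx)
    hN)).continuousAt.eventually_ne hdet

lemma dot3_gaussMap_pd_gaussMap (hx : ContDiffAt ℝ 2 x u) (hN : normalVec x u ≠ 0) (i : Fin 2) :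
    dot3 (gaussMap x u) (pd i (gaussMap x) u) = 0 := by
  have hn := (contDiffAt_gaussMap (k := 1) hx hN).differentiableAt one_ne_zero
  have hconst : (fun v => dot3 (gaussMap x v) (gaussMap x v)) =ᶠ[𝓝 u] fun _ => 1 :=
    (eventually_normalVec_ne_zero (hx.of_le one_le_two) hN).mono fun v => dot3_gaussMap_self
  have hderiv : pds i (fun v => dot3 (gaussMap x v) (gaussMap x v)) u = 0 := by
    simp [pds, hconst.fderiv_eq]
  rw [pds_dot3 hn hn, dot3_comm (pd i (gaussMap x) u)] at hderiv
  linarith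

lemma dot3_pd_pd_gaussMap (hx : ContDiffAt ℝ 2 x u) (hN : normalVec x u ≠ 0) (i j : Fin 2) :
    dot3 (pd j x u) (pd i (gaussMap x) u) = -fformII x u i j := by
  have hn := (contDiffAt_gaussMap (k := 1) hx hN).differentiableAt one_ne_zero
  have hxj := (contDiffAt_pd (k := 1) hx j).differentiableAt one_ne_zero
  have hderiv : pds i (fun v => dot3 (pd j x v) (gaussMap x v)) u = 0 := by
    simp [pds, dot3_pd_gaussMap]
  rw [pds_dot3 hxj hn] at hderiv
  exact eq_neg_of_add_eq_zero_left hderiv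

/-- The matrix `b_{ik} g^{kj}` of the shape operator in the coordinate frame `x_{/1}, x_{/2}`;
row `i` holds the coefficients of `-n_{/i}`. -/
def shapeMatrix (x : Param → Vec3) (u : Param) : Matrix (Fin 2) (Fin 2) ℝ :=
  fformII x u * (fformI x u)⁻¹

lemma shapeMatrix_mul_fformI (hN : normalVec x u ≠ 0) :
    shapeMatrix x u * fformI x u = fformII x u :=
  Matrix.nonsing_inv_mul_cancel_right _ _ (det_fformI_ne_zero hN).isUnit

lemma weingarten_equation (hx : ContDiffAt ℝ 2 x u) (hN : normalVec x u ≠ 0) (i : Fin 2) :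
    pd i (gaussMap x) u = -∑ j, shapeMatrix x u i j • pd j x u := by
  have hdot : ∀ p, dot3 p (pd i (gaussMap x) u + ∑ j, shapeMatrix x u i j • pd j x u) =
      dot3 p (pd i (gaussMap x) u) + ∑ j, shapeMatrix x u i j * dot3 (pd j x u) p := fun p => by
    simp only [dot3_comm _ p, dot3_eq_dotProduct, dotProduct_add, dotProduct_sum, dotProduct_smul,
      smul_eq_mul]
  have htangent : ∀ l, dot3 (pd l x u)
      (pd i (gaussMap x) u + ∑ j, shapeMatrix x u i j • pd j x u) = 0 := fun l => by
    have hb : ∑ j, shapeMatrix x u i j * dot3 (pd j x u) (pd l x u) = fformII x u i l := by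
      rw [← shapeMatrix_mul_fformI hN]
      rfl
    rw [hdot, dot3_pd_pd_gaussMap hx hN, hb, neg_add_cancel]
  have hnormal : dot3 (normalVec x u)
      (pd i (gaussMap x) u + ∑ j, shapeMatrix x u i j • pd j x u) = 0 := by
    have hn : dot3 (normalVec x u) (pd i (gaussMap x) u) = 0 := by
      rw [← norm3_smul_gaussMap hN, dot3_comm, dot3_smul, dot3_comm,
        dot3_gaussMap_pd_gaussMap hx hN, mul_zero]
    simp only [hdot, hn, dot3_pd_normalVec, mul_zero, Finset.sum_const_zero, add_zero]
  exact eq_neg_of_add_eq_zero_left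
    (eq_zero_of_dotProduct_eq_zero hN (htangent 0) (htangent 1) hnormal)

lemma trace_shapeMatrix (x : Param → Vec3) (u : Param) :
    (shapeMatrix x u).trace = 2 * meanCurv x u := by
  have hsymm : (fformI x u).IsSymm := Matrix.IsSymm.ext fun i j => dot3_comm _ _
  have hinv : ∀ i j, (fformI x u)⁻¹ j i = (fformI x u)⁻¹ i j := hsymm.inv.apply
  simp only [shapeMatrix, Matrix.trace, Matrix.diag_apply, Matrix.mul_apply, meanCurv, hinv,
    mul_comm (fformII x u _ _)]
  ring

lemma sum_inv_fformII_smul_pd_gaussMap (hx : ContDiffAt ℝ 2 x u) (hN : normalVec x u ≠ 0)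
    (hdet : (fformII x u).det ≠ 0) (i : Fin 2) :
    ∑ j, (fformII x u)⁻¹ i j • pd j (gaussMap x) u = -∑ j, (fformI x u)⁻¹ i j • pd j x u := by
  have hcancel : (fformII x u)⁻¹ * shapeMatrix x u = (fformI x u)⁻¹ :=
    Matrix.nonsing_inv_mul_cancel_left _ _ hdet.isUnit
  simp only [weingarten_equation hx hN, smul_neg, Finset.sum_neg_distrib, Finset.smul_sum,
    smul_smul]
  rw [Finset.sum_comm]
  simp only [← Finset.sum_smul, ← Matrix.mul_apply, hcancel]

lemma sqrt_abs_det_fformII (hN : normalVec x u ≠ 0) :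
    √|(fformII x u).det| = √|gaussCurv x u| * √|(fformI x u).det| := by
  rw [← Real.sqrt_mul (abs_nonneg _), ← abs_mul, gaussCurv,
    div_mul_cancel₀ _ (det_fformI_ne_zero hN)]

lemma beltramiFlux_fformII_gaussMap (hx : ContDiffAt ℝ 2 x u) (hN : normalVec x u ≠ 0)
    (hdet : (fformII x u).det ≠ 0) (i : Fin 2) :
    beltramiFlux (fformII x) (gaussMap x) i u =
      -√|gaussCurv x u| • beltramiFlux (fformI x) x i u := by
  simp only [beltramiFlux, mul_smul, ← Finset.smul_sum,
    sum_inv_fformII_smul_pd_gaussMap hx hN hdet, sqrt_abs_det_fformII hN]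
  module

lemma beltramiFlux_fformI (x : Param → Vec3) (u : Param) (i : Fin 2) :
    beltramiFlux (fformI x) x i u =
      (norm3 (normalVec x u))⁻¹ • ∑ j, (fformI x u).adjugate i j • pd j x u := by
  have hcoeff : ∀ j, √|(fformI x u).det| * (fformI x u)⁻¹ i j =
      (norm3 (normalVec x u))⁻¹ * (fformI x u).adjugate i j := fun j => by
    rw [sqrt_abs_det_fformI, Matrix.inv_def, Ring.inverse_eq_inv', det_fformI, Matrix.smul_apply,
      smul_eq_mul, ← mul_assoc, sq, ← div_eq_mul_inv, div_self_mul_self']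
  simp only [beltramiFlux, hcoeff, mul_smul, Finset.smul_sum]

lemma beltramiFlux_fformI_zero (x : Param → Vec3) (u : Param) :
    beltramiFlux (fformI x) x 0 u = pd 1 x u ⨯₃ gaussMap x u := by
  rw [beltramiFlux_fformI, gaussMap, map_smul, cross_cross_eq_smul_sub_smul',
    Matrix.adjugate_fin_two, Fin.sum_univ_two, sub_eq_add_neg, ← neg_smul]
  rfl

lemma beltramiFlux_fformI_one (x : Param → Vec3) (u : Param) :
    beltramiFlux (fformI x) x 1 u = gaussMap x u ⨯₃ pd 0 x u := by
  rw [beltramiFlux_fformI, gaussMap, map_smul, LinearMap.smul_apply, cross_cross_eq_smul_sub_smul,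
    Matrix.adjugate_fin_two, Fin.sum_univ_two, sub_eq_neg_add, ← neg_smul]
  rfl

lemma cross_pd_gaussMap_add_pd_gaussMap_cross (hx : ContDiffAt ℝ 2 x u) (hN : normalVec x u ≠ 0) :
    pd 1 x u ⨯₃ pd 0 (gaussMap x) u + pd 1 (gaussMap x) u ⨯₃ pd 0 x u =
      (2 * meanCurv x u) • normalVec x u := by
  rw [weingarten_equation hx hN, weingarten_equation hx hN, ← trace_shapeMatrix,
    Matrix.trace_fin_two, normalVec]
  simp only [Fin.sum_univ_two, map_neg, map_add, map_smul, cross_self, LinearMap.neg_apply,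
    LinearMap.add_apply, LinearMap.smul_apply, ← cross_anticomm (pd 0 x u) (pd 1 x u)]
  module

lemma beltrami2_fformI_self (hx : ContDiffAt ℝ 2 x u) (hN : normalVec x u ≠ 0) :
    beltrami2 (fformI x) x u = -((2 * meanCurv x u) • gaussMap x u) := by
  have hn := (contDiffAt_gaussMap (k := 1) hx hN).differentiableAt one_ne_zero
  have hxj := fun j => (contDiffAt_pd (k := 1) hx j).differentiableAt one_ne_zero
  have hdiv : ∑ i, pd i (beltramiFlux (fformI x) x i) u =
      (2 * meanCurv x u) • normalVec x u := by
    rw [Fin.sum_univ_two, funext (beltramiFlux_fformI_zero x), funext (beltramiFlux_fformI_one x),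
      pd_cross (hxj 1) hn, pd_cross hn (hxj 0), pd_comm hx 0 1,
      ← cross_pd_gaussMap_add_pd_gaussMap_cross hx hN, ← cross_anticomm (gaussMap x u)]
    abel
  rw [beltrami2_eq_divergence_beltramiFlux (contDiffAt_fformI hx) (det_fformI_ne_zero hN) hx,
    hdiv, sqrt_abs_det_fformI, smul_comm]
  rfl

end Surface

theorem stmt5_general {x : Param → Vec3} {u : Param} (hx : ContDiffAt ℝ 3 x u)
    (himm : LinearIndependent ℝ ![pd 0 x u, pd 1 x u]) (hdet : (fformII x u).det ≠ 0) :
    beltrami2 (fformII x) (gaussMap x) u =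
      (1 / (2 * gaussCurv x u)) • beltrami1 (fformI x) (gaussCurv x) x u
        + (2 * meanCurv x u) • gaussMap x u := by
  have hN : normalVec x u ≠ 0 := crossProduct_ne_zero_iff_linearIndependent.2 himm
  have hx2 : ContDiffAt ℝ 2 x u := hx.of_le (by norm_num)
  have hK0 : gaussCurv x u ≠ 0 := div_ne_zero hdet (det_fformI_ne_zero hN)
  have hK : DifferentiableAt ℝ (gaussCurv x) u :=
    (contDiffAt_gaussCurv (k := 1) hx hN).differentiableAt one_ne_zero
  have hflux : ∀ i, beltramiFlux (fformII x) (gaussMap x) i =ᶠ[𝓝 u]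
      fun v => -√|gaussCurv x v| • beltramiFlux (fformI x) x i v := fun i => by
    filter_upwards [hx2.eventually (by simp),
      eventually_normalVec_ne_zero (hx2.of_le one_le_two) hN,
      eventually_det_fformII_ne_zero hx2 hN hdet] with v hxv hNv hdetv
    exact beltramiFlux_fformII_gaussMap hxv hNv hdetv i
  rw [beltrami2_eq_of_beltramiFlux_eq_neg_smul (contDiffAt_fformII hx hN) hdet
      (contDiffAt_gaussMap hx hN) (contDiffAt_fformI hx2) (det_fformI_ne_zero hN) hx2
      (hasFDerivAt_sqrt_abs hK hK0).differentiableAt (sqrt_abs_det_fformII hN) hflux,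
    inv_sqrt_abs_smul_beltrami1 hK hK0, beltrami2_fformI_self hx2 hN, sub_neg_eq_add]

/-- `Δ^{II} n = (1/(2K)) ∇^{I}(K, x) + 2H n` on `U`. -/
theorem stmt5 (U : Set Param) (x : Param → Vec3)
    (hU : IsOpen U) (hUconn : IsConnected U)
    (hx : ContDiffOn ℝ (⊤ : ℕ∞) x U) (himm : Immersed x U)
    (hell : ∀ u ∈ U, (fformII x u).PosDef) :
    ∀ u ∈ U,
      beltrami2 (fformII x) (gaussMap x) u =
        (1 / (2 * gaussCurv x u)) • beltrami1 (fformI x) (gaussCurv x) x u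
          + (2 * meanCurv x u) • gaussMap x u := fun u hu =>
  stmt5_general ((hx.contDiffAt (hU.mem_nhds hu)).of_le (WithTop.coe_le_coe.2 le_top)) (himm u hu)
    (hell u hu).det_pos.ne'
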